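/- arXiv:1603.08715 — 4 statements merged into one kernel-verified Lean document; each statement's English description precedes it below -/
import Mathlib

section
/- Let d, n, k ≥ 1 and let Y = Σ^{ℤ^d} × {0^{ℤ^d}} ⊆ X_{n,k} be the set of configurations with no head. Then TM(ℤ^d,n,k) equals the set of endomorphisms φ of X_{n,k} (continuous shift-equivariant self-maps of X_{n,k}) such that φ restricted to Y is the identity and φ^{-1}(Y) = Y; and RTM(ℤ^d,n,k) equals the set of automorphisms φ of X_{n,k} (bijective endomorphisms whose inverse is also an endomorphism) such that φ restricted to Y is the identity. -/
open Function

/-- `ℤ^d`. -/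
abbrev V (d : ℕ) : Type := Fin d → ℤ

/-- A head configuration is valid if it carries at most one head. -/
def headOk {d k : ℕ} (y : V d → Option (Fin k)) : Prop :=
  ∀ u v : V d, (y u).isSome → (y v).isSome → u = v

/-- The space `X_{n,k}`: a tape in `Σ^{ℤ^d}` together with at most one head
carrying a state in `Q = Fin k`. -/
abbrev X (d n k : ℕ) : Type :=
  { c : (V d → Fin n) × (V d → Option (Fin k)) // headOk c.2 }

/-- `DefinedBy F F' f T` : `T` is the moving-head Turing machine defined by the
local rule `f`, reading the tape on the window `F`, writing on the window `F'`,
changing the state and moving the head. -/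
def DefinedBy {d n k : ℕ} (F F' : Finset (V d))
    (f : (V d → Fin n) → Fin k → (V d → Fin n) × Fin k × V d)
    (T : X d n k → X d n k) : Prop :=
  -- `f` only depends on the restriction of the tape to `F`, and only the
  -- restriction of its tape output to `F'` matters:
  (∀ x x' q, (∀ v ∈ F, x v = x' v) →
      (∀ v ∈ F', (f x q).1 v = (f x' q).1 v) ∧ (f x q).2 = (f x' q).2) ∧
  -- a configuration with no head is fixed:
  (∀ c : X d n k, (∀ v, c.val.2 v = none) → T c = c) ∧
  -- if the head is at `v` in state `q`, apply the local rule there: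
  (∀ (c : X d n k) (v : V d) (q : Fin k), c.val.2 v = some q →
    (∀ t, (T c).val.1 t =
      if t - v ∈ F' then (f (fun u => c.val.1 (u + v)) q).1 (t - v) else c.val.1 t) ∧
    (∀ t, (T c).val.2 t =
      if t = v + (f (fun u => c.val.1 (u + v)) q).2.2
      then some (f (fun u => c.val.1 (u + v)) q).2.1 else none))

/-- A moving-head `(d,n,k)`-Turing machine. -/
def IsTM {d n k : ℕ} (T : X d n k → X d n k) : Prop :=
  ∃ F F' f, DefinedBy F F' f T

/-- A reversible moving-head Turing machine: a Turing machine admitting a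
Turing machine inverse. -/
def IsRTM {d n k : ℕ} (T : X d n k → X d n k) : Prop :=
  IsTM T ∧ ∃ S : X d n k → X d n k, IsTM S ∧ S ∘ T = id ∧ T ∘ S = id

instance (k : ℕ) : TopologicalSpace (Option (Fin k)) := ⊥

/-- The shift `ℤ^d`-action on `X_{n,k}`. -/
def shiftX {d n k : ℕ} (u : V d) (c : X d n k) : X d n k :=
  ⟨(fun t => c.val.1 (t - u), fun t => c.val.2 (t - u)), by
    intro a b ha hb
    have h := c.prop _ _ ha hb
    exact sub_left_inj.mp h⟩

/-- `Y`: the set of configurations with no head. -/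
def Y (d n k : ℕ) : Set (X d n k) := {c | ∀ v, c.val.2 v = none}

/-- Endomorphisms of the subshift `X_{n,k}`: continuous shift-equivariant self-maps. -/
def IsEndo {d n k : ℕ} (φ : X d n k → X d n k) : Prop :=
  Continuous φ ∧ ∀ (u : V d) (c : X d n k), φ (shiftX u c) = shiftX u (φ c)

instance discOpt (k : ℕ) : DiscreteTopology (Option (Fin k)) := ⟨rfl⟩

theorem X_compact (d n k : ℕ) : CompactSpace (X d n k) := by
  have : CompactSpace (Option (Fin k)) := Finite.compactSpace
  apply isCompact_iff_compactSpace.mp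
  apply IsClosed.isCompact
  have : {c : (V d → Fin n) × (V d → Option (Fin k)) | headOk c.2} =
      ⋂ u, ⋂ v, {c | (c.2 u).isSome → (c.2 v).isSome → u = v} := by
    ext c; simp [headOk]
  change IsClosed {c : (V d → Fin n) × (V d → Option (Fin k)) | headOk c.2}
  rw [this]
  refine isClosed_iInter fun u => isClosed_iInter fun v => ?_
  have hc : Continuous (fun c : (V d → Fin n) × (V d → Option (Fin k)) => (c.2 u, c.2 v)) := by
    fun_prop
  exact (isClosed_discrete {p : Option (Fin k) × Option (Fin k) |
    p.1.isSome → p.2.isSome → u = v}).preimage hc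

def cyl {d n k : ℕ} (W : Finset (V d)) (c : X d n k) : Set (X d n k) :=
  {c' | ∀ v ∈ W, c.val.1 v = c'.val.1 v ∧ c.val.2 v = c'.val.2 v}

theorem cyl_open {d n k : ℕ} (W : Finset (V d)) (c : X d n k) : IsOpen (cyl W c) := by
  have : cyl W c = ⋂ v ∈ W, {c' : X d n k | c.val.1 v = c'.val.1 v ∧ c.val.2 v = c'.val.2 v} := by
    ext; simp [cyl]
  rw [this]
  refine isOpen_biInter_finset fun v _ => ?_
  have hc : Continuous (fun c : X d n k => (c.val.1 v, c.val.2 v)) := by fun_prop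
  exact (isOpen_discrete {p : Fin n × Option (Fin k) | c.val.1 v = p.1 ∧ c.val.2 v = p.2}).preimage hc

theorem cyl_nhds {d n k : ℕ} (c : X d n k) (s : Set (X d n k)) (hs : IsOpen s) (hc : c ∈ s) :
    ∃ W, cyl W c ⊆ s := by
  classical
  obtain ⟨s', hs', rfl⟩ := isOpen_induced_iff.mp hs
  obtain ⟨a, b, ha, hb, hca, hcb, hab⟩ := isOpen_prod_iff.mp hs' c.val.1 c.val.2 hc
  obtain ⟨I, u, hu, hI⟩ := isOpen_pi_iff.mp ha _ hca
  obtain ⟨J, w, hw, hJ⟩ := isOpen_pi_iff.mp hb _ hcb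
  refine ⟨I ∪ J, fun c' h => hab ⟨hI ?_, hJ ?_⟩⟩
  · intro i hi
    rw [← (h i (Finset.mem_union_left _ hi)).1]; exact (hu i hi).2
  · intro i hi
    rw [← (h i (Finset.mem_union_right _ hi)).2]; exact (hw i hi).2

theorem unif {d n k : ℕ} {α : Type*} [TopologicalSpace α] [DiscreteTopology α]
    (g : X d n k → α) (hg : Continuous g) :
    ∃ W, ∀ c c', c' ∈ cyl W c → g c = g c' := by
  classical
  have := X_compact d n k
  have h1 : ∀ c, ∃ W, cyl W c ⊆ g ⁻¹' {g c} := fun c =>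
    cyl_nhds c _ ((isOpen_discrete _).preimage hg) rfl
  choose W hW using h1
  obtain ⟨t, ht⟩ := isCompact_univ.elim_finite_subcover (fun c => cyl (W c) c)
    (fun c => cyl_open _ _) (fun c _ => Set.mem_iUnion.mpr ⟨c, fun v _ => ⟨rfl, rfl⟩⟩)
  refine ⟨t.biUnion W, fun c c' h => ?_⟩
  obtain ⟨i, hi, hci⟩ := Set.mem_iUnion₂.mp (ht (Set.mem_univ c))
  have e1 : g c = g i := hW i hci
  have e2 : g c' = g i := by
    refine hW i fun v hv => ?_
    have a := hci v hv
    have b := h v (Finset.mem_biUnion.mpr ⟨i, hi, hv⟩)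
    exact ⟨a.1.trans b.1, a.2.trans b.2⟩
  rw [e1, e2]

theorem cont_of {d n k : ℕ} (φ : X d n k → X d n k)
    (h : ∀ c t, ∃ W, ∀ c' ∈ cyl W c, (φ c').val.1 t = (φ c).val.1 t ∧
      (φ c').val.2 t = (φ c).val.2 t) : Continuous φ := by
  have key : ∀ c t, ∀ᶠ c' in nhds c, (φ c').val.1 t = (φ c).val.1 t ∧
      (φ c').val.2 t = (φ c).val.2 t := by
    intro c t
    obtain ⟨W, hW⟩ := h c t
    filter_upwards [(cyl_open W c).mem_nhds (fun v _ => ⟨rfl, rfl⟩)] with c' hc' using hW c' hc'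
  refine Continuous.subtype_mk (f := fun c => (φ c).val) ?_ _
  refine Continuous.prodMk (f := fun c => (φ c).val.1) (g := fun c => (φ c).val.2)
    (continuous_pi fun t => ?_) (continuous_pi fun t => ?_)
  · refine IsLocallyConstant.continuous ((IsLocallyConstant.iff_eventually_eq _).mpr fun c => ?_)
    filter_upwards [key c t] with c' h using h.1
  · refine IsLocallyConstant.continuous ((IsLocallyConstant.iff_eventually_eq _).mpr fun c => ?_)
    filter_upwards [key c t] with c' h using h.2

theorem endo_unif {d n k : ℕ} (φ : X d n k → X d n k) (h : IsEndo φ) :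
    ∃ W : Finset (V d), ∀ (t : V d) (c c' : X d n k),
      (∀ v ∈ W, c.val.1 (v + t) = c'.val.1 (v + t) ∧ c.val.2 (v + t) = c'.val.2 (v + t)) →
      (φ c).val.1 t = (φ c').val.1 t ∧ (φ c).val.2 t = (φ c').val.2 t := by
  obtain ⟨hc, hs⟩ := h
  obtain ⟨W, hW⟩ := unif (fun c : X d n k => ((φ c).val.1 0, (φ c).val.2 0)) (by fun_prop)
  refine ⟨W, fun t c c' h => ?_⟩
  have := hW (shiftX (-t) c) (shiftX (-t) c') (fun v hv => by simpa [shiftX] using h v hv)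
  simp only [hs] at this
  simpa [shiftX] using this

theorem head_cases {d n k : ℕ} (c : X d n k) :
    (∀ v, c.val.2 v = none) ∨ ∃ v q, c.val.2 v = some q := by
  by_cases h : ∀ v, c.val.2 v = none
  · exact Or.inl h
  · push Not at h
    obtain ⟨v, hv⟩ := h
    exact Or.inr ⟨v, Option.ne_none_iff_exists'.mp hv⟩

theorem X_ext {d n k : ℕ} {c c' : X d n k} (h1 : ∀ t, c.val.1 t = c'.val.1 t)
    (h2 : ∀ t, c.val.2 t = c'.val.2 t) : c = c' :=
  Subtype.ext (Prod.ext (funext h1) (funext h2))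

theorem tm_cont {d n k : ℕ} (T : X d n k → X d n k) (h : IsTM T) : Continuous T := by
  classical
  obtain ⟨F, F', f, hf, h0, h1⟩ := h
  apply cont_of
  intro c t
  rcases head_cases c with hc | ⟨v, q, hv⟩
  · -- the set of moves is finite
    have hfin : (Set.range fun p : (V d → Fin n) × Fin k => (f p.1 p.2).2.2).Finite := by
      by_cases hN : Nonempty (Fin n)
      · let e : (F → Fin n) → V d → Fin n := fun p v =>
          if h : v ∈ F then p ⟨v, h⟩ else Classical.choice hN
        refine (Set.finite_range fun p : (F → Fin n) × Fin k => (f (e p.1) p.2).2.2).subset ?_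
        rintro _ ⟨⟨x, q⟩, rfl⟩
        refine ⟨(fun v => x v, q), ?_⟩
        have := (hf (e fun v => x v) x q (fun v hv => by simp [e, hv])).2
        simp only [this]
      · have : IsEmpty (Fin n) := not_nonempty_iff.mp hN
        exact (hN ⟨c.val.1 0⟩).elim
    refine ⟨{t} ∪ F'.image (fun u => t - u) ∪ hfin.toFinset.image (fun u => t - u), ?_⟩
    intro c' h'
    have ht := h' t (by simp)
    rw [h0 c hc]
    rcases head_cases c' with hc' | ⟨v, q, hv⟩
    · rw [h0 c' hc']; exact ⟨ht.1.symm, ht.2.symm⟩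
    · obtain ⟨a, b⟩ := h1 c' v q hv
      rw [a, b, hc t]
      have hnot : v ∉ {t} ∪ F'.image (fun u => t - u) ∪ hfin.toFinset.image (fun u => t - u) := by
        intro hm
        have := (h' v hm).2
        rw [hc, hv] at this
        cases this
      constructor
      · rw [if_neg, ht.1]
        intro hm
        apply hnot
        apply Finset.mem_union_left
        apply Finset.mem_union_right
        exact Finset.mem_image.mpr ⟨t - v, hm, by abel⟩
      · rw [if_neg]
        intro hm
        apply hnot
        apply Finset.mem_union_right
        refine Finset.mem_image.mpr ⟨_, hfin.mem_toFinset.mpr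
          ⟨((fun u => c'.val.1 (u + v)), q), rfl⟩, ?_⟩
        exact sub_eq_of_eq_add hm
  · refine ⟨{t, v} ∪ F.image (fun u => u + v), ?_⟩
    intro c' h'
    have ht := h' t (by simp)
    have hv' : c'.val.2 v = some q := by rw [← (h' v (by simp)).2, hv]
    obtain ⟨a, b⟩ := h1 c v q hv
    obtain ⟨a', b'⟩ := h1 c' v q hv'
    have hl := hf (fun u => c'.val.1 (u + v)) (fun u => c.val.1 (u + v)) q (fun u hu =>
      (h' (u + v) (Finset.mem_union_right _ (Finset.mem_image_of_mem _ hu))).1.symm)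
    rw [a, b, a', b', hl.2, ← ht.1]
    refine ⟨?_, rfl⟩
    split_ifs with hm
    · exact hl.1 _ hm
    · rfl

theorem tm_endo {d n k : ℕ} (T : X d n k → X d n k) (h : IsTM T) :
    IsEndo T ∧ (∀ c ∈ Y d n k, T c = c) ∧ T ⁻¹' (Y d n k) = Y d n k := by
  have hcont := tm_cont T h
  obtain ⟨F, F', f, hf, h0, h1⟩ := h
  refine ⟨⟨hcont, ?_⟩, h0, ?_⟩
  · intro u c
    rcases head_cases c with hc | ⟨v, q, hv⟩
    · rw [h0 c hc, h0 _ (fun v => by simp [shiftX, hc])]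
    · obtain ⟨a, b⟩ := h1 c v q hv
      obtain ⟨a', b'⟩ := h1 (shiftX u c) (v + u) q (by simpa [shiftX] using hv)
      have e : (fun w => (shiftX u c).val.1 (w + (v + u))) = fun w => c.val.1 (w + v) := by
        funext w
        simp [shiftX, ← add_assoc]
      rw [e] at a' b'
      apply X_ext
      · intro t
        rw [a']
        simp only [shiftX]
        rw [a, show t - (v + u) = t - u - v by abel]
      · intro t
        rw [b']
        simp only [shiftX]
        rw [b]
        congr 1
        apply propext
        constructor
        · rintro rfl; abel
        · intro h; rw [sub_eq_iff_eq_add] at h; rw [h]; abel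
  · ext c
    constructor
    · intro h
      rcases head_cases c with hc | ⟨v, q, hv⟩
      · exact hc
      · have := (h1 c v q hv).2 (v + (f (fun u => c.val.1 (u + v)) q).2.2)
        rw [if_pos rfl, h _] at this
        cases this
    · intro h
      change T c ∈ Y d n k
      rw [h0 c h]; exact h

def mkX {d n k : ℕ} (x : V d → Fin n) (q : Fin k) : X d n k :=
  ⟨(x, fun v => if v = 0 then some q else none), by
    intro u v hu hv
    simp only at hu hv
    split_ifs at hu hv with h1 h2
    · rw [h1, h2]
    all_goals simp_all⟩

def mkY {d n : ℕ} (k : ℕ) (x : V d → Fin n) : X d n k :=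
  ⟨(x, fun _ => none), by intro u v hu; simp at hu⟩

theorem endo_tm {d n k : ℕ} (φ : X d n k → X d n k) (h : IsEndo φ)
    (hY : ∀ c ∈ Y d n k, φ c = c) (hp : φ ⁻¹' (Y d n k) = Y d n k) : IsTM φ := by
  classical
  obtain ⟨W, hW⟩ := endo_unif φ h
  have hex : ∀ (x : V d → Fin n) (q : Fin k), ∃ p : Fin k × V d,
      (φ (mkX x q)).val.2 p.2 = some p.1 := by
    intro x q
    rcases head_cases (φ (mkX x q)) with hc | ⟨v, q', hv⟩
    · have : mkX x q ∈ φ ⁻¹' (Y d n k) := hc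
      rw [hp] at this
      have := this 0
      simp [mkX] at this
    · exact ⟨(q', v), hv⟩
  choose p hpp using hex
  have huniq : ∀ x q s r, (φ (mkX x q)).val.2 s = some r → (r, s) = p x q := by
    intro x q s r hs
    have e : s = (p x q).2 := (φ (mkX x q)).prop _ _ (by rw [hs]; rfl) (by rw [hpp]; rfl)
    have := hpp x q
    rw [← e, hs] at this
    exact Prod.ext (Option.some.inj this) e
  -- far from the head nothing happens
  have hfar : ∀ x q s, s ∉ W.image (fun w => -w) →
      (φ (mkX x q)).val.1 s = x s ∧ (φ (mkX x q)).val.2 s = none := by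
    intro x q s hs
    have := hW s (mkX x q) (mkY k x) (fun v hv => ⟨rfl, by
      simp only [mkX, mkY]
      rw [if_neg]
      intro h0
      exact hs (Finset.mem_image.mpr ⟨v, hv, neg_eq_of_add_eq_zero_right h0⟩)⟩)
    rw [hY (mkY k x) (fun _ => rfl)] at this
    exact this
  refine ⟨(W ×ˢ W.image (fun w => -w)).image (fun a => a.1 + a.2), W.image (fun w => -w),
    fun x q => ((φ (mkX x q)).val.1, p x q), ?_, hY, ?_⟩
  · intro x x' q hx
    have loc : ∀ s ∈ W.image (fun w => -w), (φ (mkX x q)).val.1 s = (φ (mkX x' q)).val.1 s ∧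
        (φ (mkX x q)).val.2 s = (φ (mkX x' q)).val.2 s := by
      intro s hs
      exact hW s _ _ (fun v hv => ⟨hx _ (Finset.mem_image.mpr
        ⟨(v, s), Finset.mem_product.mpr ⟨hv, hs⟩, rfl⟩), rfl⟩)
    refine ⟨fun v hv => (loc v hv).1, ?_⟩
    have hm : (p x q).2 ∈ W.image (fun w => -w) := by
      by_contra hm
      have := (hfar x q _ hm).2
      rw [hpp] at this
      cases this
    have := (loc _ hm).2
    rw [hpp] at this
    exact huniq x' q _ _ this.symm
  · intro c v q hv
    have hc : c = shiftX v (mkX (fun u => c.val.1 (u + v)) q) := by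
      apply X_ext
      · intro t; simp [shiftX, mkX]
      · intro t
        simp only [shiftX, mkX]
        split_ifs with ht
        · rw [sub_eq_zero.mp ht, hv]
        · by_contra hne
          exact ht (sub_eq_zero.mpr (c.prop _ _ (Option.ne_none_iff_isSome.mp hne)
            (by rw [hv]; rfl)))
    generalize hx : (fun u => c.val.1 (u + v)) = x at hc
    have hφ : φ c = shiftX v (φ (mkX x q)) := by rw [hc]; exact h.2 _ _
    rw [hφ]
    constructor
    · intro t
      simp only [shiftX]
      split_ifs with ht
      · rfl
      · rw [(hfar x q _ ht).1, ← hx]; simp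
    · intro t
      simp only [shiftX]
      split_ifs with ht
      · rw [ht, add_sub_cancel_left, hpp]
      · by_contra hne
        obtain ⟨r, hr⟩ := Option.ne_none_iff_exists'.mp hne
        apply ht
        rw [← huniq x q _ _ hr]; exact (add_sub_cancel v t).symm

/-- `TM(ℤ^d,n,k)` is the set of endomorphisms of `X_{n,k}` fixing `Y` pointwise with
`φ⁻¹(Y) = Y`, and `RTM(ℤ^d,n,k)` is the set of automorphisms of `X_{n,k}`
(bijective endomorphisms whose inverse is also an endomorphism) fixing `Y` pointwise. -/
theorem tm_eq_endos_fixing_headless (d n k : ℕ) (hd : 1 ≤ d) (hn : 1 ≤ n) (hk : 1 ≤ k) :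
    ({T | IsTM T} =
      {φ : X d n k → X d n k | IsEndo φ ∧ (∀ c ∈ Y d n k, φ c = c) ∧
        φ ⁻¹' (Y d n k) = Y d n k}) ∧
    ({T | IsRTM T} =
      {φ : X d n k → X d n k | (Function.Bijective φ ∧ IsEndo φ ∧
        ∃ ψ : X d n k → X d n k, IsEndo ψ ∧ Function.LeftInverse ψ φ ∧
          Function.RightInverse ψ φ) ∧ (∀ c ∈ Y d n k, φ c = c)}) := by
  have key : {T | IsTM T} =
      {φ : X d n k → X d n k | IsEndo φ ∧ (∀ c ∈ Y d n k, φ c = c) ∧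
        φ ⁻¹' (Y d n k) = Y d n k} := by
    ext φ
    exact ⟨fun h => tm_endo φ h, fun h => endo_tm φ h.1 h.2.1 h.2.2⟩
  refine ⟨key, ?_⟩
  have pre : ∀ φ : X d n k → X d n k, Function.Injective φ → (∀ c ∈ Y d n k, φ c = c) →
      φ ⁻¹' (Y d n k) = Y d n k := by
    intro φ hi hY
    ext c
    constructor
    · intro h
      have e : φ c = c := hi (hY _ h)
      rw [← e]; exact h
    · intro h
      change φ c ∈ Y d n k
      rw [hY c h]; exact h
  ext φ
  constructor
  · rintro ⟨hT, S, hS, h1, h2⟩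
    have l : Function.LeftInverse S φ := fun c => congrFun h1 c
    have r : Function.RightInverse S φ := fun c => congrFun h2 c
    exact ⟨⟨⟨l.injective, r.surjective⟩, (tm_endo φ hT).1, S, (tm_endo S hS).1, l, r⟩,
      (tm_endo φ hT).2.1⟩
  · rintro ⟨⟨hb, he, ψ, hψ, l, r⟩, hY⟩
    have hY2 : ∀ c ∈ Y d n k, ψ c = c := fun c hc => by
      have := l c
      rwa [hY c hc] at this
    exact ⟨endo_tm φ he hY (pre φ hb.1 hY), ψ,
      endo_tm ψ hψ hY2 (pre ψ r.injective hY2), funext l, funext r⟩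
end

section
/- Let d, n, k ≥ 1. A function T : Σ^{ℤ^d} × Q → Σ^{ℤ^d} × Q is a moving tape (d,n,k)-Turing machine (i.e. is defined by some local rule) if and only if T is continuous and there exist a continuous function s : Σ^{ℤ^d} × Q → ℤ^d and a natural number a such that for every (x,q), the configurations T(x,q)_1 and σ_{s(x,q)}(x) agree at every coordinate v with ‖v‖_∞ ≥ a. -/
open Function

/-- The configuration space `Σ^{ℤ^d} × Q` of the moving-tape model. -/
abbrev Cfg (d n k : ℕ) : Type := (V d → Fin n) × Fin k

/-- `TapeDefinedBy F F' f T` : `T` is the moving-tape Turing machine defined by the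
local rule `f`: if `f(x|_F, q) = (p, q', u)` then `T(x,q) = (σ_u y, q')` where `y`
agrees with `x` outside `F'` and equals `p` on `F'`. -/
def TapeDefinedBy {d n k : ℕ} (F F' : Finset (V d))
    (f : (V d → Fin n) → Fin k → (V d → Fin n) × Fin k × V d)
    (T : Cfg d n k → Cfg d n k) : Prop :=
  -- `f` only depends on the restriction of the tape to `F`, and only the
  -- restriction of its tape output to `F'` matters:
  (∀ x x' q, (∀ v ∈ F, x v = x' v) →
      (∀ v ∈ F', (f x q).1 v = (f x' q).1 v) ∧ (f x q).2 = (f x' q).2) ∧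
  -- the machine equation:
  (∀ (x : V d → Fin n) (q : Fin k),
    (T (x, q)).2 = (f x q).2.1 ∧
    ∀ t, (T (x, q)).1 t =
      if t - (f x q).2.2 ∈ F' then (f x q).1 (t - (f x q).2.2)
      else x (t - (f x q).2.2))

/-- A moving-tape `(d,n,k)`-Turing machine. -/
def IsTMfix {d n k : ℕ} (T : Cfg d n k → Cfg d n k) : Prop :=
  ∃ F F' f, TapeDefinedBy F F' f T

/-- The sup-norm `‖v‖_∞` of `v ∈ ℤ^d`, as a natural number. -/
def supnorm {d : ℕ} (v : V d) : ℕ := Finset.univ.sup fun i => (v i).natAbs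

lemma tm_cont_of_local {d n k : ℕ} {Y : Type*} [TopologicalSpace Y] (g : Cfg d n k → Y)
    (h : ∀ c : Cfg d n k, ∃ F : Finset (V d), ∀ c' : Cfg d n k, c'.2 = c.2 →
      (∀ v ∈ F, c'.1 v = c.1 v) → g c' = g c) : Continuous g := by
  apply IsLocallyConstant.continuous
  rw [IsLocallyConstant.iff_exists_open]
  intro c
  obtain ⟨F, hF⟩ := h c
  refine ⟨{c' | c'.2 = c.2} ∩ ⋂ v ∈ F, {c' | c'.1 v = c.1 v}, ?_, ?_, ?_⟩
  · refine IsOpen.inter ?_ (isOpen_biInter_finset fun v _ => ?_)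
    · exact (isOpen_discrete {c.2}).preimage continuous_snd
    · have hc : Continuous (fun c' : Cfg d n k => c'.1 v) := by fun_prop
      exact (isOpen_discrete {c.1 v}).preimage hc
  · simp
  · rintro c' ⟨h1, h2⟩
    simp only [Set.mem_iInter, Set.mem_setOf_eq] at h1 h2
    exact hF c' h1 h2

lemma tm_local_of_cont {d n k : ℕ} {Y : Type*} [TopologicalSpace Y] [DiscreteTopology Y]
    (g : Cfg d n k → Y) (hg : Continuous g) :
    ∃ F : Finset (V d), ∀ c c' : Cfg d n k, c'.2 = c.2 →
      (∀ v ∈ F, c'.1 v = c.1 v) → g c' = g c := by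
  classical
  have key : ∀ c : Cfg d n k, ∃ F : Finset (V d), ∀ c' : Cfg d n k, c'.2 = c.2 →
      (∀ v ∈ F, c'.1 v = c.1 v) → g c' = g c := by
    rintro ⟨x, q⟩
    have ho : IsOpen {y : V d → Fin n | g (y, q) = g (x, q)} :=
      (isOpen_discrete {g (x, q)}).preimage
        (hg.comp (continuous_id.prodMk continuous_const))
    rw [isOpen_pi_iff] at ho
    obtain ⟨I, u, hu, hI⟩ := ho x rfl
    refine ⟨I, ?_⟩
    rintro ⟨y, q'⟩ h1 h2
    simp only at h1 h2
    subst h1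
    exact hI (fun v hv => by rw [h2 v hv]; exact (hu v hv).2)
  choose Fc hFc using key
  let U : Cfg d n k → Set (Cfg d n k) := fun c =>
    {c' | c'.2 = c.2} ∩ ⋂ v ∈ Fc c, {c' | c'.1 v = c.1 v}
  have hU : ∀ c, IsOpen (U c) := by
    intro c
    refine IsOpen.inter ?_ (isOpen_biInter_finset fun v _ => ?_)
    · exact (isOpen_discrete {c.2}).preimage continuous_snd
    · have hc : Continuous (fun c' : Cfg d n k => c'.1 v) := by fun_prop
      exact (isOpen_discrete {c.1 v}).preimage hc
  obtain ⟨t, ht⟩ := (isCompact_univ (X := Cfg d n k)).elim_finite_subcover U hU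
    (fun c _ => Set.mem_iUnion.2 ⟨c, by simp [U]⟩)
  refine ⟨t.biUnion Fc, fun c c' h1 h2 => ?_⟩
  have hc := ht (Set.mem_univ c)
  simp only [Set.mem_iUnion, U, Set.mem_inter_iff, Set.mem_iInter, Set.mem_setOf_eq] at hc
  obtain ⟨b, hb, hq, hv⟩ := hc
  rw [hFc b c hq hv, hFc b c' (h1.trans hq)]
  intro v hvb
  rw [h2 v (Finset.mem_biUnion.2 ⟨b, hb, hvb⟩), hv v hvb]

theorem movingTape_dynamical_characterization (d n k : ℕ)
    (hd : 1 ≤ d) (hn : 1 ≤ n) (hk : 1 ≤ k) (T : Cfg d n k → Cfg d n k) :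
    IsTMfix T ↔
      (Continuous T ∧ ∃ (s : Cfg d n k → V d) (a : ℕ), Continuous s ∧
        ∀ (c : Cfg d n k) (v : V d), a ≤ supnorm v → (T c).1 v = c.1 (v - s c)) := by
  classical
  constructor
  · rintro ⟨F, F', f, hloc, hT⟩
    let s : Cfg d n k → V d := fun c => (f c.1 c.2).2.2
    have hs : Continuous s := by
      refine tm_cont_of_local s fun c => ⟨F, ?_⟩
      rintro ⟨x', q'⟩ h1 h2
      simp only at h1 h2
      subst h1
      simp only [s]
      rw [(hloc x' c.1 c.2 h2).2]
    have hfin : (Set.range s).Finite := (isCompact_range hs).finite_of_discrete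
    refine ⟨?_, s, ((Finset.image₂ (fun w u => w + u) F' hfin.toFinset).sup supnorm) + 1, hs, ?_⟩
    · refine Continuous.prodMk (f := fun c => (T c).1) (g := fun c => (T c).2)
        (continuous_pi fun t => ?_) ?_
      · refine tm_cont_of_local _ fun c => ⟨insert (t - s c) F, ?_⟩
        rintro ⟨x', q'⟩ h1 h2
        obtain ⟨x, q⟩ := c
        simp only at h1 h2
        subst h1
        have h3 := hloc x' x q' (fun v hv => h2 v (Finset.mem_insert_of_mem hv))
        have h4 := h2 _ (Finset.mem_insert_self _ _)
        simp only [s] at h4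
        rw [(hT x' q').2, (hT x q').2, h3.2]
        split_ifs with h
        · exact h3.1 _ h
        · exact h4
      · refine tm_cont_of_local _ fun c => ⟨F, ?_⟩
        rintro ⟨x', q'⟩ h1 h2
        obtain ⟨x, q⟩ := c
        simp only at h1 h2
        subst h1
        rw [(hT x' q').1, (hT x q').1, (hloc x' x q' h2).2]
    · rintro ⟨x, q⟩ v hv
      rw [(hT x q).2, if_neg]
      intro hmem
      have : v ∈ Finset.image₂ (fun w u => w + u) F' hfin.toFinset :=
        Finset.mem_image₂.2 ⟨_, hmem, s (x, q), by simp, by simp [s]⟩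
      have := Finset.le_sup (f := supnorm) this
      omega
  · rintro ⟨hT, s, a, hs, h⟩
    have hfin : (Set.range s).Finite := (isCompact_range hs).finite_of_discrete
    let B : Finset (V d) := Finset.Icc (fun _ => -(a : ℤ)) (fun _ => (a : ℤ))
    have hB : ∀ v : V d, v ∉ B → a ≤ supnorm v := by
      intro v hv
      by_contra hlt
      apply hv
      have hi : ∀ i, (v i).natAbs ≤ supnorm v := fun i =>
        Finset.le_sup (f := fun i => (v i).natAbs) (Finset.mem_univ i)
      refine Finset.mem_Icc.2 ⟨fun i => ?_, fun i => ?_⟩ <;>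
      · have := hi i
        simp only
        omega
    let F' : Finset (V d) := Finset.image₂ (fun w u => w - u) B hfin.toFinset
    obtain ⟨F0, hF0⟩ := tm_local_of_cont
      (fun c => (s c, (fun v : B => (T c).1 v), (T c).2)) (by fun_prop)
    refine ⟨F0 ∪ F', F', fun x q =>
      (fun v => (T (x, q)).1 (v + s (x, q)), (T (x, q)).2, s (x, q)), ?_, ?_⟩
    · intro x x' q hx
      have h0 := hF0 (x', q) (x, q) rfl (fun v hv => hx v (Finset.mem_union_left _ hv))
      simp only [Prod.mk.injEq] at h0
      obtain ⟨h1, h2, h3⟩ := h0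
      refine ⟨fun v hv => ?_, by simp [h1, h3]⟩
      simp only
      rw [h1]
      by_cases hb : v + s (x', q) ∈ B
      · exact congrFun h2 ⟨_, hb⟩
      · rw [h _ _ (hB _ hb), h _ _ (hB _ hb), h1]
        simpa using hx v (Finset.mem_union_right _ hv)
    · intro x q
      refine ⟨rfl, fun t => ?_⟩
      simp only [sub_add_cancel]
      split_ifs with hm
      · rfl
      · apply h (x, q)
        apply hB
        intro hb
        exact hm (Finset.mem_image₂.2 ⟨t, hb, s (x, q), by simp, rfl⟩)
end

section
/- Let n, k ≥ 1. A classical Turing machine T ∈ TM(ℤ,n,k) is reversible if and only if T = T₁ ∘ T₀ for some state-symbol permutation T₀ and some state-dependent shift T₁. -/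
open Function

/-- A head configuration on `ℤ` is valid if it carries at most one head. -/
def headOk1 {k : ℕ} (y : ℤ → Option (Fin k)) : Prop :=
  ∀ u v : ℤ, (y u).isSome → (y v).isSome → u = v

/-- The space `X_{n,k}` in dimension one: a tape in `Σ^ℤ` together with at most
one head carrying a state in `Q = Fin k`. -/
abbrev X1 (n k : ℕ) : Type :=
  { c : (ℤ → Fin n) × (ℤ → Option (Fin k)) // headOk1 c.2 }

/-- `DefinedBy1 F F' f T` : `T` is the moving-head Turing machine on `ℤ` defined by
the local rule `f`, reading the tape on the window `F`, writing on the window `F'`,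
changing the state and moving the head. -/
def DefinedBy1 {n k : ℕ} (F F' : Finset ℤ)
    (f : (ℤ → Fin n) → Fin k → (ℤ → Fin n) × Fin k × ℤ)
    (T : X1 n k → X1 n k) : Prop :=
  -- `f` only depends on the restriction of the tape to `F`, and only the
  -- restriction of its tape output to `F'` matters:
  (∀ x x' q, (∀ v ∈ F, x v = x' v) →
      (∀ v ∈ F', (f x q).1 v = (f x' q).1 v) ∧ (f x q).2 = (f x' q).2) ∧
  -- a configuration with no head is fixed:
  (∀ c : X1 n k, (∀ v, c.val.2 v = none) → T c = c) ∧
  -- if the head is at `v` in state `q`, apply the local rule there: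
  (∀ (c : X1 n k) (v : ℤ) (q : Fin k), c.val.2 v = some q →
    (∀ t, (T c).val.1 t =
      if t - v ∈ F' then (f (fun u => c.val.1 (u + v)) q).1 (t - v) else c.val.1 t) ∧
    (∀ t, (T c).val.2 t =
      if t = v + (f (fun u => c.val.1 (u + v)) q).2.2
      then some (f (fun u => c.val.1 (u + v)) q).2.1 else none))

/-- A moving-head `(1,n,k)`-Turing machine. -/
def IsTM1 {n k : ℕ} (T : X1 n k → X1 n k) : Prop :=
  ∃ F F' f, DefinedBy1 F F' f T

/-- A reversible Turing machine: a Turing machine admitting a Turing machine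
inverse. -/
def IsRTM1 {n k : ℕ} (T : X1 n k → X1 n k) : Prop :=
  IsTM1 T ∧ ∃ S : X1 n k → X1 n k, IsTM1 S ∧ S ∘ T = id ∧ T ∘ S = id

/-- A classical Turing machine: one definable with in- and out-window `{0}` and
movements in `{-1,0,1}`. -/
def IsClassical {n k : ℕ} (T : X1 n k → X1 n k) : Prop :=
  ∃ f, DefinedBy1 ({0} : Finset ℤ) ({0} : Finset ℤ) f T ∧
    ∀ x q, (f x q).2.2 ∈ ({-1, 0, 1} : Set ℤ)

/-- A state-symbol permutation: the classical machine induced by a permutation `g`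
of `Σ × Q`; it replaces the pair (symbol under the head, state) by its image under
`g` and does not move the head. -/
def IsStateSymbolPerm {n k : ℕ} (T : X1 n k → X1 n k) : Prop :=
  ∃ g : Equiv.Perm (Fin n × Fin k),
    DefinedBy1 ({0} : Finset ℤ) ({0} : Finset ℤ)
      (fun x q => (fun _ => (g (x 0, q)).1, (g (x 0, q)).2, 0)) T

/-- A state-dependent shift: a classical machine that never modifies the tape or
the state and moves the head by a vector in `{-1,0,1}` depending only on the
current state. -/
def IsStateDependentShift {n k : ℕ} (T : X1 n k → X1 n k) : Prop :=
  ∃ D : Fin k → ℤ, (∀ q, D q ∈ ({-1, 0, 1} : Set ℤ)) ∧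
    DefinedBy1 (∅ : Finset ℤ) (∅ : Finset ℤ) (fun x q => (x, q, D q)) T


def conf {n k : ℕ} (x : ℤ → Fin n) (v : ℤ) (q : Fin k) : X1 n k :=
  ⟨(x, fun t => if t = v then some q else none), by
    intro a b ha hb
    by_cases h1 : a = v <;> by_cases h2 : b = v <;> simp_all⟩

theorem conf_inj {n k : ℕ} {x x' : ℤ → Fin n} {v v' : ℤ} {q q' : Fin k}
    (h : conf x v q = conf x' v' q') : x = x' ∧ v = v' ∧ q = q' := by
  have h1 := congrArg (fun c => c.val.1) h
  have h2 := congrFun (congrArg (fun c => c.val.2) h) v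
  simp only [conf] at h1 h2
  by_cases hv : v = v' <;> simp_all

theorem eq_conf {n k : ℕ} (c : X1 n k) (v : ℤ) (q : Fin k) (h : c.val.2 v = some q) :
    c = conf c.val.1 v q := by
  apply Subtype.ext
  apply Prod.ext
  · rfl
  · funext t
    by_cases ht : t = v
    · subst ht; simp [conf, h]
    · simp only [conf, ht, if_false]
      cases hc : c.val.2 t with
      | none => rfl
      | some r => exact absurd (c.property t v (by simp [hc]) (by simp [h])) ht

theorem conf_cases {n k : ℕ} (c : X1 n k) :
    (∀ v, c.val.2 v = none) ∨ ∃ x v q, c = conf x v q := by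
  by_cases h : ∀ v, c.val.2 v = none
  · exact Or.inl h
  · push Not at h
    obtain ⟨v, hv⟩ := h
    obtain ⟨q, hq⟩ := Option.ne_none_iff_exists'.mp hv
    exact Or.inr ⟨_, v, q, eq_conf c v q hq⟩

theorem defined_conf {n k : ℕ} {F F' : Finset ℤ}
    {f : (ℤ → Fin n) → Fin k → (ℤ → Fin n) × Fin k × ℤ}
    {T : X1 n k → X1 n k} (h : DefinedBy1 F F' f T) (x : ℤ → Fin n) (v : ℤ) (q : Fin k) :
    T (conf x v q) =
      conf (fun t => if t - v ∈ F' then (f (fun u => x (u + v)) q).1 (t - v) else x t)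
        (v + (f (fun u => x (u + v)) q).2.2) (f (fun u => x (u + v)) q).2.1 := by
  obtain ⟨h1, h2⟩ := h.2.2 (conf x v q) v q (by simp [conf])
  apply Subtype.ext
  apply Prod.ext
  · funext t; exact h1 t
  · funext t; exact h2 t

theorem defined_of {n k : ℕ} {F F' : Finset ℤ}
    {f : (ℤ → Fin n) → Fin k → (ℤ → Fin n) × Fin k × ℤ}
    {T : X1 n k → X1 n k}
    (h0 : ∀ x x' q, (∀ v ∈ F, x v = x' v) →
      (∀ v ∈ F', (f x q).1 v = (f x' q).1 v) ∧ (f x q).2 = (f x' q).2)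
    (h1 : ∀ c : X1 n k, (∀ v, c.val.2 v = none) → T c = c)
    (h2 : ∀ (x : ℤ → Fin n) (v : ℤ) (q : Fin k), T (conf x v q) =
      conf (fun t => if t - v ∈ F' then (f (fun u => x (u + v)) q).1 (t - v) else x t)
        (v + (f (fun u => x (u + v)) q).2.2) (f (fun u => x (u + v)) q).2.1) :
    DefinedBy1 F F' f T := by
  refine ⟨h0, h1, fun c v q hc => ?_⟩
  have := h2 c.val.1 v q
  rw [← eq_conf c v q hc] at this
  rw [this]
  exact ⟨fun t => rfl, fun t => rfl⟩

open Classical in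
noncomputable def mkT {n k : ℕ} (G : (ℤ → Fin n) → ℤ → Fin k → X1 n k) (c : X1 n k) : X1 n k :=
  if h : ∃ p : (ℤ → Fin n) × ℤ × Fin k, c = conf p.1 p.2.1 p.2.2 then
    G h.choose.1 h.choose.2.1 h.choose.2.2 else c

theorem mkT_conf {n k : ℕ} (G : (ℤ → Fin n) → ℤ → Fin k → X1 n k) (x v q) :
    mkT G (conf x v q) = G x v q := by
  have h : ∃ p : (ℤ → Fin n) × ℤ × Fin k, conf x v q = conf p.1 p.2.1 p.2.2 := ⟨(x, v, q), rfl⟩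
  obtain ⟨h1, h2, h3⟩ := conf_inj h.choose_spec
  rw [mkT, dif_pos h, ← h1, ← h2, ← h3]

theorem mkT_none {n k : ℕ} (G : (ℤ → Fin n) → ℤ → Fin k → X1 n k) (c : X1 n k)
    (hc : ∀ v, c.val.2 v = none) : mkT G c = c := by
  rw [mkT, dif_neg]
  rintro ⟨p, hp⟩
  have := hc p.2.1
  rw [hp] at this
  simp [conf] at this

theorem exists_defined {n k : ℕ} (F F' : Finset ℤ)
    (f : (ℤ → Fin n) → Fin k → (ℤ → Fin n) × Fin k × ℤ)
    (h0 : ∀ x x' q, (∀ v ∈ F, x v = x' v) →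
      (∀ v ∈ F', (f x q).1 v = (f x' q).1 v) ∧ (f x q).2 = (f x' q).2) :
    ∃ T : X1 n k → X1 n k, DefinedBy1 F F' f T :=
  ⟨mkT _, defined_of h0 (mkT_none _) (mkT_conf _)⟩

theorem conf_congr {n k : ℕ} {x x' : ℤ → Fin n} {v v' : ℤ} {q q' : Fin k}
    (h1 : ∀ t, x t = x' t) (h2 : v = v') (h3 : q = q') : conf x v q = conf x' v' q' := by
  rw [funext h1, h2, h3]

theorem perm_conf {n k : ℕ} {g : Equiv.Perm (Fin n × Fin k)} {T : X1 n k → X1 n k}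
    (h : DefinedBy1 ({0} : Finset ℤ) ({0} : Finset ℤ)
      (fun x q => (fun _ => (g (x 0, q)).1, (g (x 0, q)).2, 0)) T) (x v q) :
    T (conf x v q) = conf (update x v (g (x v, q)).1) v (g (x v, q)).2 := by
  rw [defined_conf h]
  apply conf_congr
  · intro t
    by_cases ht : t = v
    · subst ht; simp
    · simp [ht, sub_eq_zero]
  · simp
  · simp

theorem shift_conf {n k : ℕ} {D : Fin k → ℤ} {T : X1 n k → X1 n k}
    (h : DefinedBy1 (∅ : Finset ℤ) (∅ : Finset ℤ) (fun x q => (x, q, D q)) T) (x v q) :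
    T (conf x v q) = conf x (v + D q) q := by
  rw [defined_conf h]
  apply conf_congr <;> simp

theorem backward {n k : ℕ} {T T₀ T₁ : X1 n k → X1 n k} (hT : IsClassical T)
    (h0 : IsStateSymbolPerm T₀) (h1 : IsStateDependentShift T₁) (h : T = T₁ ∘ T₀) :
    IsRTM1 T := by
  obtain ⟨f, hf, -⟩ := hT
  refine ⟨⟨_, _, f, hf⟩, ?_⟩
  obtain ⟨g, hg⟩ := h0
  obtain ⟨D, hD, hD'⟩ := h1
  have hDm : ∀ q, - D q ∈ ({-1, 0, 1} : Finset ℤ) := by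
    intro q
    have := hD q
    simp only [Set.mem_insert_iff, Set.mem_singleton_iff] at this
    simp only [Finset.mem_insert, Finset.mem_singleton]
    omega
  have hTc : ∀ x v q, T (conf x v q) =
      conf (update x v (g (x v, q)).1) (v + D (g (x v, q)).2) (g (x v, q)).2 := by
    intro x v q
    rw [h, comp_apply, perm_conf hg, shift_conf hD']
  obtain ⟨S, hS⟩ := exists_defined (n := n) (k := k) ({-1, 0, 1} : Finset ℤ) ({-1, 0, 1} : Finset ℤ)
    (fun x q => (update x (- D q) (g.symm (x (- D q), q)).1, (g.symm (x (- D q), q)).2, - D q)) (by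
      intro x x' q hx
      have hq := hx _ (hDm q)
      simp only [hq, and_true]
      intro v hv
      by_cases hvD : v = - D q
      · simp [hvD]
      · simp [hvD, hx v hv])
  have hSc : ∀ x v q, S (conf x v q) =
      conf (update x (v - D q) (g.symm (x (v - D q), q)).1) (v - D q) (g.symm (x (v - D q), q)).2 := by
    intro x v q
    rw [defined_conf hS]
    have e : - D q + v = v - D q := by ring
    apply conf_congr
    · intro t
      by_cases ht : t = v - D q
      · have e1 : t - v = - D q := by omega
        rw [e1, if_pos (hDm q), ht]; simp [e]
      · have e1 : t - v ≠ - D q := by omega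
        simp [ht, e1]
    · simp [sub_eq_add_neg]
    · simp [e]
  refine ⟨S, ⟨_, _, _, hS⟩, ?_, ?_⟩
  · funext c
    rcases conf_cases c with hc | ⟨x, v, q, rfl⟩
    · simp [hf.2.1 c hc, hS.2.1 c hc]
    · rw [comp_apply, hTc, hSc]
      simp
  · funext c
    rcases conf_cases c with hc | ⟨x, v, q, rfl⟩
    · simp [hf.2.1 c hc, hS.2.1 c hc]
    · rw [comp_apply, hSc, hTc]
      simp

theorem forward {n k : ℕ} (hn : 1 ≤ n) {T : X1 n k → X1 n k} (hT : IsClassical T)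
    (hinj : Injective T) : ∃ T₀ T₁ : X1 n k → X1 n k,
        IsStateSymbolPerm T₀ ∧ IsStateDependentShift T₁ ∧ T = T₁ ∘ T₀ := by
  obtain ⟨f, hf, hm⟩ := hT
  let φ : Fin n × Fin k → Fin n × Fin k := fun p =>
    ((f (fun _ => p.1) p.2).1 0, (f (fun _ => p.1) p.2).2.1)
  let M : Fin n × Fin k → ℤ := fun p => (f (fun _ => p.1) p.2).2.2
  have hTc : ∀ x v q, T (conf x v q) =
      conf (update x v (φ (x v, q)).1) (v + M (x v, q)) (φ (x v, q)).2 := by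
    intro x v q
    rw [defined_conf hf]
    obtain ⟨e1, e2⟩ := hf.1 (fun u => x (u + v)) (fun _ => x v) q (by simp)
    apply conf_congr
    · intro t
      by_cases ht : t = v
      · subst ht
        simpa [φ] using e1 0 (by simp)
      · simp [ht, sub_eq_zero]
    · rw [e2]
    · rw [e2]
  have key : ∀ p p', (φ p).2 = (φ p').2 → M p = M p' := by
    rintro ⟨a, q⟩ ⟨a', q'⟩ hs
    by_contra hne
    set m := M (a, q) with hmd
    set m' := M (a', q') with hmd'
    have hne1 : -m ≠ -m' := by omega
    let y : ℤ → Fin n := update (update (fun _ => a) (-m) (φ (a, q)).1) (-m') (φ (a', q')).1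
    have h1 := hTc (update y (-m) a) (-m) q
    have h2 := hTc (update y (-m') a') (-m') q'
    have y1 : y (-m) = (φ (a, q)).1 := by simp [y, hne1]
    have y2 : y (-m') = (φ (a', q')).1 := by simp [y]
    simp only [update_self, update_idem, ← y1, ← y2, update_eq_self, ← hmd, ← hmd', hs] at h1 h2
    rw [neg_add_cancel] at h1 h2
    exact hne1 (conf_inj (hinj (h1.trans h2.symm))).2.1
  have hφ : Injective φ := by
    rintro ⟨a, q⟩ ⟨a', q'⟩ hs
    have hM := key _ _ (congrArg Prod.snd hs)
    have h1 := hTc (fun _ : ℤ => a) 0 q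
    have h2 := hTc (update (fun _ : ℤ => a) 0 a') 0 q'
    simp only [update_self, update_idem, ← hM, ← hs] at h1 h2
    obtain ⟨e1, -, e3⟩ := conf_inj (hinj (h1.trans h2.symm))
    have := congrFun e1 0
    simp at this
    rw [this, e3]
  let g : Equiv.Perm (Fin n × Fin k) := Equiv.ofBijective φ (Finite.injective_iff_bijective.mp hφ)
  have hg : ∀ p, g p = φ p := fun p => rfl
  let D : Fin k → ℤ := fun s => M (g.symm (⟨0, hn⟩, s))
  have hD : ∀ p, D (φ p).2 = M p := by
    intro p
    apply key
    rw [← hg, g.apply_symm_apply]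
  obtain ⟨T₀, h0⟩ := exists_defined (n := n) (k := k) ({0} : Finset ℤ) ({0} : Finset ℤ)
      (fun x q => (fun _ => (g (x 0, q)).1, (g (x 0, q)).2, 0)) (by
        intro x x' q hx
        simp [hx 0 (by simp)])
  obtain ⟨T₁, h1⟩ := exists_defined (n := n) (k := k) (∅ : Finset ℤ) (∅ : Finset ℤ)
      (fun x q => (x, q, D q)) (by simp)
  refine ⟨T₀, T₁, ⟨g, h0⟩, ⟨D, fun q => hm _ _, h1⟩, ?_⟩
  funext c
  rcases conf_cases c with hc | ⟨x, v, q, rfl⟩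
  · simp [hf.2.1 c hc, h0.2.1 c hc, h1.2.1 c hc]
  · rw [comp_apply, hTc, perm_conf h0, shift_conf h1, hg, hD]

/-- A classical Turing machine is reversible iff it is of the form `T₁ ∘ T₀` with
`T₀` a state-symbol permutation and `T₁` a state-dependent shift. -/
theorem classical_reversibility (n k : ℕ) (hn : 1 ≤ n) (hk : 1 ≤ k)
    (T : X1 n k → X1 n k) (hT : IsClassical T) :
    IsRTM1 T ↔
      ∃ T₀ T₁ : X1 n k → X1 n k,
        IsStateSymbolPerm T₀ ∧ IsStateDependentShift T₁ ∧ T = T₁ ∘ T₀ := by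
  constructor
  · rintro ⟨-, S, -, hS, -⟩
    exact forward hn hT (LeftInverse.injective (g := S) (congrFun hS))
  · rintro ⟨T₀, T₁, h0, h1, h⟩
    exact backward hT h0 h1 h
end

section
/- Let d, k ≥ 1 and n ≥ 2. The group S_∞ of finitely supported permutations of ℕ embeds into LP(ℤ^d,n,k); consequently RTM(ℤ^d,n,k) is not residually finite. -/
open Function

/-- The set of reversible Turing machines, viewed as permutations of `X_{n,k}`. -/
def RTMset (d n k : ℕ) : Set (Equiv.Perm (X d n k)) :=
  {π | IsTM (⇑π) ∧ IsTM (⇑π.symm)}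

/-- The group `RTM(ℤ^d,n,k)` of reversible Turing machines (a subgroup of the
permutation group of `X_{n,k}`; the set of reversible Turing machines is closed
under composition and inversion, so it coincides with the subgroup it generates). -/
def RTMgrp (d n k : ℕ) : Subgroup (Equiv.Perm (X d n k)) :=
  Subgroup.closure (RTMset d n k)

/-- Local permutations: reversible Turing machines that never move the head. -/
def LPset (d n k : ℕ) : Set (Equiv.Perm (X d n k)) :=
  {π | π ∈ RTMset d n k ∧
    ∀ (c : X d n k) (v : V d), ((π c).val.2 v).isSome = (c.val.2 v).isSome}

/-- The group `LP(ℤ^d,n,k)` of local permutations. -/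
def LPgrp (d n k : ℕ) : Subgroup (Equiv.Perm (X d n k)) :=
  Subgroup.closure (LPset d n k)

/-- Reversible finite-state automata: reversible Turing machines that never
change the tape. -/
def RFAset (d n k : ℕ) : Set (Equiv.Perm (X d n k)) :=
  {π | π ∈ RTMset d n k ∧ ∀ c : X d n k, (π c).val.1 = c.val.1}

/-- The group `RFA(ℤ^d,n,k)` of reversible finite-state automata. -/
def RFAgrp (d n k : ℕ) : Subgroup (Equiv.Perm (X d n k)) :=
  Subgroup.closure (RFAset d n k)

/-- State-permutations: reversible machines that never move the head and never
change the tape, only permuting the state as a function of the tape. -/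
def SPset (d n k : ℕ) : Set (Equiv.Perm (X d n k)) :=
  {π | π ∈ RTMset d n k ∧ (∀ c : X d n k, (π c).val.1 = c.val.1) ∧
    ∀ (c : X d n k) (v : V d), ((π c).val.2 v).isSome = (c.val.2 v).isSome}

/-- The group `SP(ℤ^d,n,k)` of state-permutations. -/
def SPgrp (d n k : ℕ) : Subgroup (Equiv.Perm (X d n k)) :=
  Subgroup.closure (SPset d n k)

/-- The machines `T_u` that move the head by `u ∈ ℤ^d` without changing the
tape or the state. -/
def Shiftset (d n k : ℕ) : Set (Equiv.Perm (X d n k)) :=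
  {π | ∃ u : V d, ∀ c : X d n k,
    (π c).val.1 = c.val.1 ∧ ∀ t, (π c).val.2 t = c.val.2 (t - u)}

/-- The group `Shift(ℤ^d,n,k)`. -/
def Shiftgrp (d n k : ℕ) : Subgroup (Equiv.Perm (X d n k)) :=
  Subgroup.closure (Shiftset d n k)

/-- The group `OB(ℤ^d,n,k) = ⟨Shift(ℤ^d,n,k), LP(ℤ^d,n,k)⟩` of oblivious Turing
machines. -/
def OBgrp (d n k : ℕ) : Subgroup (Equiv.Perm (X d n k)) :=
  Subgroup.closure (Shiftset d n k ∪ LPset d n k)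

/-- The group `EL(ℤ^d,n,k) = ⟨RFA(ℤ^d,n,k), LP(ℤ^d,n,k)⟩` of elementary Turing
machines. -/
def ELgrp (d n k : ℕ) : Subgroup (Equiv.Perm (X d n k)) :=
  Subgroup.closure (RFAset d n k ∪ LPset d n k)

/-- The group `S_∞` of finitely supported permutations of `ℕ`. -/
def Sinf : Subgroup (Equiv.Perm ℕ) where
  carrier := {π | {x | π x ≠ x}.Finite}
  one_mem' := by simp
  mul_mem' := by
    intro a b ha hb
    refine (ha.union hb).subset fun x hx => ?_
    by_contra h
    simp only [Set.mem_union, Set.mem_setOf_eq, not_or, not_not] at h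
    exact hx (by simp [Equiv.Perm.mul_apply, h.2, h.1])
  inv_mem' := by
    intro a ha
    refine ha.subset fun x hx => ?_
    simp only [Set.mem_setOf_eq] at hx ⊢
    intro h
    exact hx (by rw [Equiv.Perm.inv_eq_iff_eq]; exact h.symm)

/-- A group is residually finite if every nontrivial element survives in some
homomorphism to a finite group. -/
def ResiduallyFinite (G : Type*) [Group G] : Prop :=
  ∀ g : G, g ≠ 1 → ∃ (H : Type) (_ : Group H) (_ : Finite H) (φ : G →* H), φ g ≠ 1

open Classical in
noncomputable def actFun {d n k : ℕ} (e : Equiv.Perm (V d)) (c : X d n k) : X d n k :=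
  ⟨(fun t => if h : ∃ v, (c.val.2 v).isSome then
      c.val.1 (e⁻¹ (t - h.choose) + h.choose) else c.val.1 t, c.val.2), c.property⟩

theorem actFun_snd {d n k : ℕ} (e : Equiv.Perm (V d)) (c : X d n k) :
    (actFun e c).val.2 = c.val.2 := rfl

theorem actFun_head {d n k : ℕ} (e : Equiv.Perm (V d)) (c : X d n k) (v : V d)
    (hv : (c.val.2 v).isSome) (t : V d) :
    (actFun e c).val.1 t = c.val.1 (e⁻¹ (t - v) + v) := by
  have h : ∃ v, (c.val.2 v).isSome := ⟨v, hv⟩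
  have h2 : h.choose = v := c.property _ _ h.choose_spec hv
  simp only [actFun]
  rw [dif_pos h, h2]

theorem actFun_nohead {d n k : ℕ} (e : Equiv.Perm (V d)) (c : X d n k)
    (hv : ¬ ∃ v, (c.val.2 v).isSome) : actFun e c = c := by
  apply Subtype.ext
  apply Prod.ext
  · funext t
    simp only [actFun]
    rw [dif_neg hv]
  · rfl

theorem actFun_one {d n k : ℕ} (c : X d n k) : actFun 1 c = c := by
  by_cases h : ∃ v, (c.val.2 v).isSome
  · obtain ⟨v, hv⟩ := h
    apply Subtype.ext
    apply Prod.ext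
    · funext t
      rw [actFun_head 1 c v hv]
      simp
    · rfl
  · exact actFun_nohead 1 c h

theorem actFun_mul {d n k : ℕ} (a b : Equiv.Perm (V d)) (c : X d n k) :
    actFun (a * b) c = actFun a (actFun b c) := by
  by_cases h : ∃ v, (c.val.2 v).isSome
  · obtain ⟨v, hv⟩ := h
    apply Subtype.ext
    apply Prod.ext
    · funext t
      rw [actFun_head (a * b) c v hv, actFun_head a (actFun b c) v hv, actFun_head b c v hv]
      simp
    · rfl
  · rw [actFun_nohead _ c h, actFun_nohead b c h, actFun_nohead a c h]

noncomputable def actHom (d n k : ℕ) : Equiv.Perm (V d) →* Equiv.Perm (X d n k) :=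
  MonoidHom.toHomPerm
    { toFun := fun e => (actFun e : X d n k → X d n k)
      map_one' := funext fun c => actFun_one c
      map_mul' := fun a b => funext fun c => actFun_mul a b c }

theorem actHom_apply {d n k : ℕ} (e : Equiv.Perm (V d)) (c : X d n k) :
    actHom d n k e c = actFun e c := rfl

theorem actFun_isTM {d n k : ℕ} (e : Equiv.Perm (V d)) (S : Finset (V d))
    (hS : ∀ v, v ∉ S → e⁻¹ v = v) : IsTM (actFun e : X d n k → X d n k) := by
  refine ⟨S, S, fun x q => (fun u => x (e⁻¹ u), q, 0), ?_, ?_, ?_⟩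
  · intro x x' q h
    refine ⟨fun v hv => h _ ?_, rfl⟩
    by_contra hc
    have h1 := (e⁻¹).injective (hS _ hc)
    rw [h1] at hc
    exact hc hv
  · intro c hc
    apply actFun_nohead
    rintro ⟨v, hv⟩
    simp [hc v] at hv
  · intro c v q hq
    have hv : (c.val.2 v).isSome := by simp [hq]
    constructor
    · intro t
      rw [actFun_head e c v hv]
      split_ifs with h
      · rfl
      · rw [hS _ h]; simp
    · intro t
      rw [actFun_snd]
      simp only [add_zero]
      split_ifs with h
      · rw [h, hq]
      · by_contra hc
        exact h (c.property _ _ (Option.isSome_iff_ne_none.mpr hc) hv)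

theorem actHom_mem {d n k : ℕ} (e : Equiv.Perm (V d)) (S : Finset (V d))
    (hS : ∀ v, v ∉ S → e v = v) : actHom d n k e ∈ LPset d n k := by
  have hS' : ∀ v, v ∉ S → e⁻¹ v = v := fun v hv => by
    rw [Equiv.Perm.inv_eq_iff_eq]; exact (hS v hv).symm
  refine ⟨⟨actFun_isTM e S hS', ?_⟩, fun c v => rfl⟩
  have h : ((actHom d n k e).symm : X d n k → X d n k) = actFun e⁻¹ := by
    change ⇑((actHom d n k e)⁻¹) = _
    rw [← map_inv]
    rfl
  rw [h]
  exact actFun_isTM _ S (by simpa using hS)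

theorem actHom_injective {d n k : ℕ} (hn : 2 ≤ n) (hk : 1 ≤ k) :
    Function.Injective (actHom d n k) := by
  rw [injective_iff_map_eq_one]
  intro e he
  suffices h : e⁻¹ = 1 by simpa using h
  ext1 s
  by_contra hs
  classical
  let c : X d n k := ⟨(fun t => if t = s then ⟨1, by omega⟩ else ⟨0, by omega⟩,
    fun v => if v = 0 then some ⟨0, by omega⟩ else none), by
      intro u v hu hv
      by_cases h1 : u = 0 <;> by_cases h2 : v = 0 <;> simp_all⟩
  have h0 : (c.val.2 0).isSome := by simp [c]
  have h1 : actFun e c = c := by rw [← actHom_apply, he]; rfl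
  have h2 := actFun_head e c 0 h0 s
  rw [h1] at h2
  simp only [Equiv.Perm.one_apply] at hs
  simp [c] at h2
  exact hs h2

def diagEmb (d : ℕ) (hd : 1 ≤ d) : ℕ ↪ V d :=
  ⟨fun m _ => (m : ℤ), fun a b h => by
    have this : (a : ℤ) = (b : ℤ) := congrFun h ⟨0, by omega⟩
    exact_mod_cast this⟩

theorem viaEmb_mem {d n k : ℕ} (hd : 1 ≤ d) (π : Sinf) :
    actHom d n k (π.val.viaEmbedding (diagEmb d hd)) ∈ LPset d n k := by
  have hf : {x | π.val x ≠ x}.Finite := π.property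
  refine actHom_mem _ (hf.toFinset.map (diagEmb d hd)) ?_
  intro v hv
  by_cases h : v ∈ Set.range (diagEmb d hd)
  · obtain ⟨m, rfl⟩ := h
    rw [Equiv.Perm.viaEmbedding_apply]
    congr 1
    by_contra hc
    exact hv (Finset.mem_map_of_mem _ (by simpa using hc))
  · exact Equiv.Perm.viaEmbedding_apply_of_notMem _ _ _ h

noncomputable def sinfHom (d n k : ℕ) (hd : 1 ≤ d) : Sinf →* LPgrp d n k :=
  (((actHom d n k).comp (Equiv.Perm.viaEmbeddingHom (diagEmb d hd))).comp
    Sinf.subtype).codRestrict (LPgrp d n k)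
    fun π => Subgroup.subset_closure (viaEmb_mem hd π)

theorem sinfHom_injective {d n k : ℕ} (hd : 1 ≤ d) (hn : 2 ≤ n) (hk : 1 ≤ k) :
    Function.Injective (sinfHom d n k hd) := by
  intro a b h
  have h1 := congrArg Subtype.val h
  exact Subtype.ext (Equiv.Perm.viaEmbeddingHom_injective _ (actHom_injective hn hk h1))

theorem swap_mem_Sinf (a b : ℕ) : Equiv.swap a b ∈ Sinf := by
  refine (Set.toFinite {a, b}).subset fun x hx => ?_
  by_contra h
  simp only [Set.mem_insert_iff, Set.mem_singleton_iff, not_or] at h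
  exact hx (Equiv.swap_apply_of_ne_of_ne h.1 h.2)

def sw (a b : ℕ) : Sinf := ⟨Equiv.swap a b, swap_mem_Sinf a b⟩

theorem sw_conj (c : Sinf) (a b : ℕ) : c * sw a b * c⁻¹ = sw (c.val a) (c.val b) :=
  Subtype.ext (Equiv.swap_apply_apply c.val a b).symm

theorem hom_finite_sw {H : Type} [Group H] [Finite H] (φ : Sinf →* H) :
    φ (sw 0 1 * (sw 0 2)⁻¹) = 1 := by
  obtain ⟨i, j, hij, h⟩ := Finite.exists_ne_map_eq_of_infinite fun i : ℕ => φ (sw 0 (i + 3))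
  let c : Sinf := sw 1 (i + 3) * sw 2 (j + 3)
  have hc (m : ℕ) : c.val m = Equiv.swap 1 (i + 3) (Equiv.swap 2 (j + 3) m) := rfl
  have h0 : c.val 0 = 0 := by
    rw [hc, Equiv.swap_apply_of_ne_of_ne (a := 2), Equiv.swap_apply_of_ne_of_ne] <;> omega
  have h1 : c.val (i + 3) = 1 := by
    rw [hc, Equiv.swap_apply_of_ne_of_ne (a := 2), Equiv.swap_apply_right] <;> omega
  have h2 : c.val (j + 3) = 2 := by
    rw [hc, Equiv.swap_apply_right, Equiv.swap_apply_of_ne_of_ne] <;> omega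
  have e1 := sw_conj c 0 (i + 3)
  have e2 := sw_conj c 0 (j + 3)
  rw [h0, h1] at e1
  rw [h0, h2] at e2
  have h' : φ (sw 0 (i + 3)) = φ (sw 0 (j + 3)) := h
  rw [map_mul, map_inv, mul_inv_eq_one, ← e1, ← e2]
  simp only [map_mul, h']

theorem LP_le_RTM (d n k : ℕ) : LPgrp d n k ≤ RTMgrp d n k :=
  Subgroup.closure_mono fun _ h => h.1

/-- For `n ≥ 2`, `S_∞` embeds into `LP(ℤ^d,n,k)`; consequently `RTM(ℤ^d,n,k)` is not
residually finite. -/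
theorem sInf_embeds_lp_and_rtm_not_residuallyFinite (d n k : ℕ)
    (hd : 1 ≤ d) (hn : 2 ≤ n) (hk : 1 ≤ k) :
    (∃ φ : Sinf →* LPgrp d n k, Function.Injective ⇑φ) ∧
    ¬ ResiduallyFinite (RTMgrp d n k) := by
  refine ⟨⟨sinfHom d n k hd, sinfHom_injective hd hn hk⟩, ?_⟩
  intro hRF
  let Φ : Sinf →* RTMgrp d n k := (Subgroup.inclusion (LP_le_RTM d n k)).comp (sinfHom d n k hd)
  have hΦ : Function.Injective Φ :=
    (Subgroup.inclusion_injective (LP_le_RTM d n k)).comp (sinfHom_injective hd hn hk)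
  have hg : sw 0 1 * (sw 0 2)⁻¹ ≠ 1 := by
    intro h
    rw [mul_inv_eq_one] at h
    have h1 : Equiv.swap 0 1 0 = Equiv.swap 0 2 0 := by
      exact congrArg (fun s : Sinf => s.val 0) h
    simp at h1
  obtain ⟨H, _, _, φ, hφ⟩ := hRF (Φ (sw 0 1 * (sw 0 2)⁻¹))
    (fun h => hg (hΦ (h.trans (map_one Φ).symm)))
  exact hφ (hom_finite_sw (φ.comp Φ))
end
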